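/- arXiv:2011.01178 — 2 statements merged into one kernel-verified Lean document; each statement's English description precedes it below -/
import Mathlib

section
/- For every preference profile and every nonempty linearly constrained feasible set ΔC, there exists a feasible random assignment x ∈ ΔC that is constrained ordinally efficient. -/
open Finset
open scoped Classical

/-- `x` is a random assignment: probabilities in `[0,1]`, each agent's row sums to `1`,
and each object's column sum is at most its quota. -/
def IsRandomAssignment {N O : Type*} [Fintype N] [Fintype O]
    (q : O → ℕ) (x : N → O → ℝ) : Prop :=
  (∀ i o, 0 ≤ x i o ∧ x i o ≤ 1) ∧
  (∀ i : N, ∑ o, x i o = 1) ∧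
  (∀ o : O, ∑ i, x i o ≤ (q o : ℝ))

/-- Cumulative share of objects weakly preferred (w.r.t. `pref`) to `o` in allocation `xi`. -/
noncomputable def upperSum {O : Type*} [Fintype O]
    (pref : O → O → Prop) (xi : O → ℝ) (o : O) : ℝ :=
  ∑ o' ∈ Finset.univ.filter (fun o' => pref o' o), xi o'

/-- `xi` (first-order) stochastically dominates `yi` with respect to `pref`. -/
def SDom {O : Type*} [Fintype O] (pref : O → O → Prop) (xi yi : O → ℝ) : Prop :=
  ∀ o, upperSum pref yi o ≤ upperSum pref xi o

/-- Strict stochastic dominance. -/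
def StrictSDom {O : Type*} [Fintype O] (pref : O → O → Prop) (xi yi : O → ℝ) : Prop :=
  SDom pref xi yi ∧ ∃ o, upperSum pref yi o < upperSum pref xi o

/-- Feasibility: random assignment satisfying the linear constraints `A x ≤ b`. -/
def Feasible {N O : Type*} [Fintype N] [Fintype O]
    (q : O → ℕ) {m : ℕ} (A : Fin m → N → O → ℝ) (b : Fin m → ℝ)
    (x : N → O → ℝ) : Prop :=
  IsRandomAssignment q x ∧ ∀ c, ∑ i, ∑ o, A c i o * x i o ≤ b c

/-- Agents `i` and `j` are of the same type w.r.t. the constraint matrix `A`. -/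
def SameType {N O : Type*} {m : ℕ} (A : Fin m → N → O → ℝ) (i j : N) : Prop :=
  ∀ c o, A c i o = A c j o

/-!
Rank each assignment by its profile of cumulative shares, one real number per agent and object,
ordered coordinatewise. Constrained ordinal efficiency is maximality of this profile over the
feasible set. The profile is continuous and the feasible set compact, so its image is compact, and a
nonempty compact set has a maximal element for any order with closed upper sections: along a chain
these sections are nested, so by compactness they have a common point, which bounds the chain, and
Zorn's lemma applies.
-/

section CompactMaximal

variable {X α : Type*} [TopologicalSpace X] [TopologicalSpace α] [Preorder α] [ClosedIciTopology α]

theorem exists_mem_upperBounds_of_isCompact {s c : Set α} (hs : IsCompact s)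
    (hcs : c ⊆ s) (hc : DirectedOn (· ≤ ·) c) (hne : c.Nonempty) :
    ∃ u ∈ s, u ∈ upperBounds c := by
  have : Nonempty c := hne.to_subtype
  have directed_Ici : Directed (· ⊇ ·) fun a : c => Set.Ici (a : α) := fun a b =>
    have ⟨d, hd, had, hbd⟩ := hc a a.2 b b.2
    ⟨⟨d, hd⟩, Set.Ici_subset_Ici.2 had, Set.Ici_subset_Ici.2 hbd⟩
  have common_point : (s ∩ ⋂ a : c, Set.Ici (a : α)).Nonempty := by
    by_contra hempty
    obtain ⟨a, ha⟩ := hs.elim_directed_family_closed _ (fun _ => isClosed_Ici)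
      (Set.not_nonempty_iff_eq_empty.1 hempty) directed_Ici
    exact ha.subset ⟨hcs a.2, Set.self_mem_Ici⟩
  obtain ⟨u, hus, hu⟩ := common_point
  exact ⟨u, hus, fun a ha => Set.mem_iInter.1 hu ⟨a, ha⟩⟩

theorem exists_maximal_of_isCompact {s : Set α} (hs : IsCompact s) (hne : s.Nonempty) :
    ∃ a, Maximal (· ∈ s) a := by
  obtain ⟨a, ha⟩ := hne
  obtain ⟨m, -, hm⟩ := zorn_le_nonempty₀ s (fun c hcs hc y hy =>
    exists_mem_upperBounds_of_isCompact hs hcs hc.directedOn ⟨y, hy⟩) a ha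
  exact ⟨m, hm⟩

theorem exists_maximalFor_of_isCompact {s : Set X} {f : X → α} (hs : IsCompact s)
    (hne : s.Nonempty) (hf : ContinuousOn f s) : ∃ x, MaximalFor (· ∈ s) f x := by
  obtain ⟨_, ⟨x, hx, rfl⟩, hmax⟩ :=
    exists_maximal_of_isCompact (hs.image_of_continuousOn hf) (hne.image f)
  exact ⟨x, hx, fun y hy hxy => hmax (Set.mem_image_of_mem f hy) hxy⟩

end CompactMaximal

section OrdinalEfficiency

variable {N O : Type*} [Fintype O] {pref : N → O → O → Prop} {x y : N → O → ℝ}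

/-- The cumulative shares of all agents at all objects. Under the coordinatewise order on profiles,
`≤` says that every agent is weakly better off in the sense of stochastic dominance. -/
noncomputable def upperSumProfile (pref : N → O → O → Prop) (x : N → O → ℝ) : N → O → ℝ :=
  fun i => upperSum (pref i) (x i)

/-- `x` is ordinally efficient subject to the constraint set `C`: it lies in `C`, and no member of
`C` stochastically dominates it for all agents, strictly for some. The paper's feasible set `ΔC` is
the case where `C` is cut out of the random assignments by linear constraints. -/
def ConstrainedOrdinallyEfficient (pref : N → O → O → Prop) (C : Set (N → O → ℝ))
    (x : N → O → ℝ) : Prop :=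
  x ∈ C ∧ ¬ ∃ y ∈ C, (∀ i, SDom (pref i) (y i) (x i)) ∧ ∃ j, StrictSDom (pref j) (y j) (x j)

theorem strictSDom_iff_upperSum_lt {R : O → O → Prop} {a b : O → ℝ} :
    StrictSDom R a b ↔ upperSum R b < upperSum R a :=
  Pi.lt_def.symm

theorem upperSumProfile_lt_iff :
    upperSumProfile pref x < upperSumProfile pref y ↔
      (∀ i, SDom (pref i) (y i) (x i)) ∧ ∃ j, StrictSDom (pref j) (y j) (x j) := by
  simp only [strictSDom_iff_upperSum_lt]
  exact Pi.lt_def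

theorem constrainedOrdinallyEfficient_iff_maximalFor {C : Set (N → O → ℝ)} :
    ConstrainedOrdinallyEfficient pref C x ↔ MaximalFor (· ∈ C) (upperSumProfile pref) x := by
  simp only [ConstrainedOrdinallyEfficient, ← upperSumProfile_lt_iff, MaximalFor,
    lt_iff_le_not_ge, not_exists, not_and, not_not]

theorem continuous_upperSumProfile (pref : N → O → O → Prop) :
    Continuous (upperSumProfile pref) := by
  unfold upperSumProfile upperSum
  fun_prop

theorem exists_constrained_ordinally_efficient_general (pref : N → O → O → Prop)
    {C : Set (N → O → ℝ)} (hC : IsCompact C) (hne : C.Nonempty) :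
    ∃ x, ConstrainedOrdinallyEfficient pref C x := by
  simp only [constrainedOrdinallyEfficient_iff_maximalFor]
  exact exists_maximalFor_of_isCompact hC hne (continuous_upperSumProfile pref).continuousOn

end OrdinalEfficiency

section Feasibility

variable {N O : Type*} [Fintype N] [Fintype O]

theorem isClosed_isRandomAssignment (q : O → ℕ) :
    IsClosed {x : N → O → ℝ | IsRandomAssignment q x} := by
  simp only [IsRandomAssignment, Set.ofPred_and, Set.ofPred_forall]
  refine .inter ?_ (.inter ?_ ?_)
  · exact isClosed_iInter fun i => isClosed_iInter fun o =>
      (isClosed_le (by fun_prop) (by fun_prop)).inter (isClosed_le (by fun_prop) (by fun_prop))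
  · exact isClosed_iInter fun i => isClosed_eq (by fun_prop) (by fun_prop)
  · exact isClosed_iInter fun o => isClosed_le (by fun_prop) (by fun_prop)

theorem isCompact_isRandomAssignment (q : O → ℕ) :
    IsCompact {x : N → O → ℝ | IsRandomAssignment q x} :=
  (isCompact_Icc (a := 0) (b := 1)).of_isClosed_subset (isClosed_isRandomAssignment q)
    fun _ hx => ⟨fun i o => (hx.1 i o).1, fun i o => (hx.1 i o).2⟩

theorem isClosed_linear_constraints {ι : Type*} (A : ι → N → O → ℝ) (b : ι → ℝ) :
    IsClosed {x : N → O → ℝ | ∀ c, ∑ i, ∑ o, A c i o * x i o ≤ b c} := by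
  simp only [Set.ofPred_forall]
  exact isClosed_iInter fun c => isClosed_le (by fun_prop) (by fun_prop)

theorem isCompact_feasible (q : O → ℕ) {m : ℕ} (A : Fin m → N → O → ℝ) (b : Fin m → ℝ) :
    IsCompact {x : N → O → ℝ | Feasible q A b x} :=
  (isCompact_isRandomAssignment q).inter_right (isClosed_linear_constraints A b)

end Feasibility

/-- For every preference profile and every nonempty linearly constrained feasible set,
there exists a feasible random assignment that is constrained ordinally efficient. -/
theorem exists_constrained_ordinally_efficient
    {N O : Type*} [Fintype N] [Fintype O]
    (q : O → ℕ) (hq : Fintype.card N ≤ ∑ o, q o)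
    (pref : N → O → O → Prop)
    (hcomplete : ∀ i a b, pref i a b ∨ pref i b a)
    (htrans : ∀ i a b c, pref i a b → pref i b c → pref i a c)
    {m : ℕ} (A : Fin m → N → O → ℝ) (b : Fin m → ℝ)
    (hne : ∃ x, Feasible q A b x) :
    ∃ x : N → O → ℝ, Feasible q A b x ∧
      ¬ ∃ x' : N → O → ℝ, Feasible q A b x' ∧
        (∀ i, SDom (pref i) (x' i) (x i)) ∧ (∃ j, StrictSDom (pref j) (x' j) (x j)) :=
  exists_constrained_ordinally_efficient_general pref (isCompact_feasible q A b) hne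
end

section
/- In the unconstrained object allocation problem on the full preference domain (agents may be indifferent between objects), there always exists a random assignment that is ordinally efficient and envy-free: no other random assignment weakly stochastically dominates it for all agents with strict dominance for some agent, and x_i sd(≽_i) x_j holds for every pair of agents i, j. -/
open Finset
open scoped Classical

/-!
Among the feasible random assignments, choose one that is max-min fair for the family of all
cumulative shares `upperSum (pref i) (x i) o`: no share can be raised without lowering another one
that is at most as large. Such points exist on compact convex sets by water filling: for the largest
guaranteeable minimum `m`, averaging shows that some share (a bottleneck) equals `m` whenever all
shares are at least `m`; fix the guarantee `m` and recurse on the other shares.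

Fairness implies ordinal efficiency at once. For envy-freeness, suppose that `i` envies `j` at `o`.
Then `i` consumes some `b` outside the upper contour set of `o`, while `j` consumes objects inside
it; let `a` be the `j`-worst of these. Trading a little of `b` for `a` raises the share of `i` at
`o` and lowers only shares of `j` at objects weakly `j`-worse than `a`. These are at least what `j`
consumes in the upper contour set of `o`, hence larger than the share of `i` at `o`, contradicting
fairness.
-/

section MaxMinFair

variable {ι E : Type*}

/-- `x` is max-min fair in `K` for the criteria `u k`, `k ∈ S`: a criterion can only be raised
within `K` at the expense of a criterion that is at most as large. The index set is a `Finset` so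
that criteria can be removed one at a time. -/
def IsMaxMinFairOn (u : ι → E → ℝ) (S : Finset ι) (K : Set E) (x : E) : Prop :=
  x ∈ K ∧ ∀ y ∈ K, ∀ k ∈ S, u k x < u k y → ∃ l ∈ S, u l y < u l x ∧ u l x ≤ u k x

lemma exists_forall_le_lineMap {S : Finset ι} {f g : ι → ℝ} {m : ℝ} (hf : ∀ l ∈ S, m ≤ f l)
    (hfg : ∀ l ∈ S, g l < m → m < f l) :
    ∃ t ∈ Set.Ioo (0 : ℝ) 1, ∀ l ∈ S, m ≤ AffineMap.lineMap (f l) (g l) t := by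
  have hsmall : ∀ᶠ t : ℝ in nhdsWithin 0 (Set.Ioi 0), t ∈ Set.Ioo (0 : ℝ) 1 :=
    Ioo_mem_nhdsGT one_pos
  have hle : ∀ᶠ t : ℝ in nhdsWithin 0 (Set.Ioi 0),
      ∀ l ∈ S, m ≤ AffineMap.lineMap (f l) (g l) t := by
    rw [Filter.eventually_all_finset]
    intro l hl
    rcases lt_or_ge (g l) m with hg | hg
    · have hcont : ContinuousAt (fun t : ℝ => AffineMap.lineMap (f l) (g l) t) 0 :=
        AffineMap.lineMap_continuous.continuousAt
      have hlt : m < AffineMap.lineMap (f l) (g l) (0 : ℝ) := by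
        simpa only [AffineMap.lineMap_apply_zero] using hfg l hl hg
      exact ((hcont.eventually_const_lt hlt).filter_mono nhdsWithin_le_nhds).mono fun _ => le_of_lt
    · filter_upwards [hsmall] with t ht
      exact (convex_Ici m).lineMap_mem (hf l hl) hg ⟨ht.1.le, ht.2.le⟩
  exact (hsmall.and hle).exists

variable [AddCommGroup E] [Module ℝ E] {u : ι → E → ℝ} {S : Finset ι} {K : Set E} {m : ℝ}

lemma lineMap_le_map_of_concaveOn {f : E → ℝ} (hf : ConcaveOn ℝ K f) {x y : E} (hx : x ∈ K)
    (hy : y ∈ K) {t : ℝ} (ht : t ∈ Set.Icc (0 : ℝ) 1) :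
    AffineMap.lineMap (f x) (f y) t ≤ f (AffineMap.lineMap x y t) := by
  simpa only [AffineMap.lineMap_apply_module] using
    hf.2 hx hy (sub_nonneg.2 ht.2) ht.1 (sub_add_cancel 1 t)

lemma exists_forall_lt_of_concaveOn (hS : S.Nonempty) (hu : ∀ k ∈ S, ConcaveOn ℝ K (u k))
    (h : ∀ k ∈ S, ∃ p ∈ K, (∀ l ∈ S, m ≤ u l p) ∧ m < u k p) :
    ∃ z ∈ K, ∀ l ∈ S, m < u l z := by
  choose! p hpK hple hplt using h
  have hw : ∑ _k ∈ S, (S.card : ℝ)⁻¹ = 1 := by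
    rw [Finset.sum_const, nsmul_eq_mul, mul_inv_cancel₀ (by simpa using hS.ne_empty)]
  have hwpos : 0 < (S.card : ℝ)⁻¹ := by simpa using hS
  obtain ⟨k₀, hk₀⟩ := hS
  refine ⟨∑ k ∈ S, (S.card : ℝ)⁻¹ • p k,
    (hu k₀ hk₀).1.sum_mem (fun _ _ => hwpos.le) hw hpK, fun l hl => ?_⟩
  calc m = ∑ _k ∈ S, (S.card : ℝ)⁻¹ * m := by rw [← Finset.sum_mul, hw, one_mul]
    _ < ∑ k ∈ S, (S.card : ℝ)⁻¹ * u l (p k) :=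
      Finset.sum_lt_sum (fun k hk => mul_le_mul_of_nonneg_left (hple k hk l hl) hwpos.le)
        ⟨l, hl, mul_lt_mul_of_pos_left (hplt l hl) hwpos⟩
    _ ≤ u l (∑ k ∈ S, (S.card : ℝ)⁻¹ • p k) :=
      (hu l hl).le_map_sum (fun _ _ => hwpos.le) hw hpK

lemma exists_bottleneck [TopologicalSpace E] (hS : S.Nonempty) (hK : IsCompact K)
    (hne : K.Nonempty) (hcont : ∀ k ∈ S, Continuous (u k)) (hu : ∀ k ∈ S, ConcaveOn ℝ K (u k)) :
    ∃ m, (∃ w ∈ K, ∀ k ∈ S, m ≤ u k w) ∧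
      ∃ b ∈ S, ∀ x ∈ K, (∀ k ∈ S, m ≤ u k x) → u b x ≤ m := by
  obtain ⟨w, hwK, hw⟩ := hK.exists_isMaxOn hne
    (Continuous.finset_inf'_apply hS hcont).continuousOn
  refine ⟨S.inf' hS fun k => u k w, ⟨w, hwK, fun k hk => Finset.inf'_le _ hk⟩, ?_⟩
  by_contra! hall
  obtain ⟨z, hzK, hz⟩ := exists_forall_lt_of_concaveOn hS hu hall
  exact (hw hzK).not_gt ((Finset.lt_inf'_iff hS).2 hz)

lemma IsMaxMinFairOn.of_bottleneck {b : ι} {x : E}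
    (hu : ∀ k ∈ S, ConcaveOn ℝ K (u k)) (hb : ∀ x ∈ K, (∀ k ∈ S, m ≤ u k x) → u b x ≤ m)
    (hx : IsMaxMinFairOn u (S.erase b) {x ∈ K | ∀ k ∈ S, m ≤ u k x} x) :
    IsMaxMinFairOn u S K x := by
  obtain ⟨⟨hxK, hxm⟩, hfair⟩ := hx
  refine ⟨hxK, fun y hy k hk hlt => ?_⟩
  by_cases hworse : ∃ l ∈ S, u l y < m ∧ u l x ≤ m
  · obtain ⟨l, hl, hyl, hxl⟩ := hworse
    exact ⟨l, hl, hyl.trans_le (hxm l hl), hxl.trans (hxm k hk)⟩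
  push Not at hworse
  obtain ⟨t, ht, hline⟩ := exists_forall_le_lineMap hxm hworse
  have hconcave (l) (hl : l ∈ S) := lineMap_le_map_of_concaveOn (hu l hl) hxK hy
    (Set.Ioo_subset_Icc_self ht)
  set z := AffineMap.lineMap x y t
  have hzK : z ∈ K := (hu k hk).1.lineMap_mem hxK hy (Set.Ioo_subset_Icc_self ht)
  have hzm : ∀ l ∈ S, m ≤ u l z := fun l hl => (hline l hl).trans (hconcave l hl)
  have hzk : u k x < u k z := ((left_lt_lineMap_iff_lt ht.1).2 hlt).trans_le (hconcave k hk)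
  have hkb : k ≠ b := by
    rintro rfl
    exact ((hxm k hk).trans_lt hzk).not_ge (hb z hzK hzm)
  obtain ⟨l, hl, hzl, hxl⟩ := hfair z ⟨hzK, hzm⟩ k (Finset.mem_erase.2 ⟨hkb, hk⟩) hzk
  have hlS := Finset.mem_of_mem_erase hl
  exact ⟨l, hlS, (lineMap_lt_left_iff_lt ht.1).1 ((hconcave l hlS).trans_lt hzl), hxl⟩

theorem exists_isMaxMinFairOn [TopologicalSpace E] (hK : IsCompact K) (hne : K.Nonempty)
    (hcont : ∀ k ∈ S, Continuous (u k)) (hu : ∀ k ∈ S, ConcaveOn ℝ K (u k)) :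
    ∃ x, IsMaxMinFairOn u S K x := by
  induction S using Finset.strongInduction generalizing K with
  | H S ih =>
    rcases S.eq_empty_or_nonempty with rfl | hS
    · obtain ⟨x, hx⟩ := hne
      exact ⟨x, hx, by simp⟩
    obtain ⟨m, ⟨w, hwK, hw⟩, b, hbS, hb⟩ := exists_bottleneck hS hK hne hcont hu
    have hclosed : IsClosed {x | ∀ k ∈ S, m ≤ u k x} := by
      simp only [Set.ofPred_forall]
      exact isClosed_biInter fun k hk => isClosed_le continuous_const (hcont k hk)
    have hconvex : Convex ℝ {x ∈ K | ∀ k ∈ S, m ≤ u k x} := fun x hx y hy s t hs ht hst =>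
      ⟨(hu b hbS).1 hx.1 hy.1 hs ht hst, fun k hk =>
        ((hu k hk).convex_ge m ⟨hx.1, hx.2 k hk⟩ ⟨hy.1, hy.2 k hk⟩ hs ht hst).2⟩
    obtain ⟨x, hx⟩ := ih (S.erase b) (Finset.erase_ssubset hbS) (hK.inter_right hclosed)
      ⟨w, hwK, hw⟩ (fun k hk => hcont k (Finset.mem_of_mem_erase hk))
      fun k hk => (hu k (Finset.mem_of_mem_erase hk)).subset (Set.sep_subset _ _) hconvex
    exact ⟨x, hx.of_bottleneck hu hb⟩

end MaxMinFair

section Transfer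

variable {O : Type*} [Fintype O] {r : O → O → Prop} {v : O → ℝ} {a b o : O} {e : ℝ}

lemma upperSum_nonneg (hv : ∀ c, 0 ≤ v c) : 0 ≤ upperSum r v o :=
  Finset.sum_nonneg fun c _ => hv c

lemma upperSum_le_sum (hv : ∀ c, 0 ≤ v c) : upperSum r v o ≤ ∑ c, v c :=
  Finset.sum_le_univ_sum_of_nonneg hv

lemma exists_pos_of_upperSum_lt_sum (h : upperSum r v o < ∑ c, v c) :
    ∃ b, ¬ r b o ∧ 0 < v b := by
  have hrest : 0 < ∑ c with ¬ r c o, v c := by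
    rw [upperSum, ← Finset.sum_filter_add_sum_filter_not univ (r · o)] at h
    linarith
  obtain ⟨b, hb, hpos⟩ := Finset.exists_lt_of_sum_lt (Finset.sum_const_zero.trans_lt hrest)
  exact ⟨b, (Finset.mem_filter.1 hb).2, hpos⟩

lemma exists_pos_of_upperSum_pos (h : 0 < upperSum r v o) : ∃ a, r a o ∧ 0 < v a := by
  obtain ⟨a, ha, hpos⟩ := Finset.exists_lt_of_sum_lt (Finset.sum_const_zero.trans_lt h)
  exact ⟨a, (Finset.mem_filter.1 ha).2, hpos⟩

lemma exists_worst_of_upperSum_pos (s : O → O → Prop) [Std.Total s] [IsTrans O s]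
    (h : 0 < upperSum r v o) :
    ∃ a, r a o ∧ 0 < v a ∧ ∀ c, r c o → 0 < v c → s c a := by
  obtain ⟨a₀, ha₀⟩ := exists_pos_of_upperSum_pos h
  have : Nonempty {c // r c o ∧ 0 < v c} := ⟨⟨a₀, ha₀⟩⟩
  obtain ⟨⟨a, hao, hpos⟩, hworst⟩ :=
    (Std.Total.directed (r := s) (Subtype.val : {c // r c o ∧ 0 < v c} → O)).finset_le univ
  exact ⟨a, hao, hpos, fun c hco hc => hworst ⟨c, hco, hc⟩ (mem_univ _)⟩

lemma upperSum_le_upperSum_of_forall_pos {s : O → O → Prop} {o' : O} (hv : ∀ c, 0 ≤ v c)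
    (h : ∀ c, r c o → 0 < v c → s c o') : upperSum r v o ≤ upperSum s v o' := by
  simp only [upperSum, Finset.sum_filter]
  refine Finset.sum_le_sum fun c _ => ?_
  rcases (hv c).eq_or_lt with hc | hc
  · simp [← hc]
  · split_ifs with hr hs
    · exact le_rfl
    · exact absurd (h c hr hc) hs
    · exact hc.le
    · exact le_rfl

/-- The allocation obtained from `v` by moving probability `e` from the object `b` to the
object `a`. -/
noncomputable def transfer (v : O → ℝ) (a b : O) (e : ℝ) : O → ℝ :=
  v + (Pi.single a e - Pi.single b e)

lemma transfer_mem_stdSimplex (hv : v ∈ stdSimplex ℝ O) (he : 0 ≤ e) (heb : e ≤ v b) :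
    transfer v a b e ∈ stdSimplex ℝ O := by
  have hadd : (0 : O → ℝ) ≤ Pi.single a e := Pi.single_nonneg.2 he
  have hsub : (Pi.single b e : O → ℝ) ≤ v := update_le_iff.2 ⟨heb, fun c _ => hv.1 c⟩
  refine ⟨fun c => ?_, ?_⟩
  · have hadd_c : (0 : ℝ) ≤ (Pi.single a e : O → ℝ) c := hadd c
    simp only [transfer, Pi.add_apply, Pi.sub_apply]
    linarith [hsub c]
  · simp [transfer, Finset.sum_add_distrib, hv.2]

lemma upperSum_transfer : upperSum r (transfer v a b e) o =
    upperSum r v o + ((if r a o then e else 0) - if r b o then e else 0) := by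
  simp [upperSum, transfer, Finset.sum_add_distrib, Finset.sum_sub_distrib, Finset.sum_pi_single']

lemma upperSum_lt_upperSum_transfer (he : 0 < e) (ha : r a o) (hb : ¬ r b o) :
    upperSum r v o < upperSum r (transfer v a b e) o := by
  simpa [upperSum_transfer, ha, hb] using he

lemma sDom_transfer [IsTrans O r] (he : 0 ≤ e) (hab : r a b) : SDom r (transfer v a b e) v := by
  intro o
  rw [upperSum_transfer, le_add_iff_nonneg_right, sub_nonneg]
  split_ifs with hb ha ha
  · exact le_rfl
  · exact absurd (_root_.trans hab hb) ha
  · exact he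
  · exact le_rfl

lemma rel_of_upperSum_transfer_lt (he : 0 ≤ e)
    (h : upperSum r (transfer v a b e) o < upperSum r v o) : r b o := by
  by_contra hb
  rw [upperSum_transfer, if_neg hb] at h
  split_ifs at h <;> linarith

end Transfer

section Exchange

variable {N O : Type*} {x : N → O → ℝ} {i j k : N} {a b : O} {e : ℝ}

/-- The assignment obtained from `x` when agent `j` gives probability `e` of the object `a` to
agent `i` in return for probability `e` of the object `b`. -/
noncomputable def exchange (x : N → O → ℝ) (i j : N) (a b : O) (e : ℝ) : N → O → ℝ :=
  x + (Pi.single i (Pi.single a e - Pi.single b e) - Pi.single j (Pi.single a e - Pi.single b e))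

lemma exchange_left (hij : i ≠ j) : exchange x i j a b e i = transfer (x i) a b e := by
  simp [exchange, transfer, hij]

lemma exchange_right (hij : i ≠ j) : exchange x i j a b e j = transfer (x j) b a e := by
  simp [exchange, transfer, hij.symm]

lemma exchange_of_ne (hi : k ≠ i) (hj : k ≠ j) : exchange x i j a b e k = x k := by
  simp [exchange, hi, hj]

lemma sum_exchange [Fintype N] : ∑ k, exchange x i j a b e k = ∑ k, x k := by
  simp [exchange, Finset.sum_add_distrib, Finset.sum_sub_distrib, Finset.sum_pi_single']

lemma eq_right_and_rel_of_upperSum_exchange_lt [Fintype O] {pref : N → O → O → Prop}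
    [IsTrans O (pref i)] {o : O} (hij : i ≠ j) (he : 0 ≤ e) (hab : pref i a b)
    (h : upperSum (pref k) (exchange x i j a b e k) o < upperSum (pref k) (x k) o) :
    k = j ∧ pref j a o := by
  rcases eq_or_ne k i with rfl | hki
  · rw [exchange_left hij] at h
    exact absurd (sDom_transfer he hab o) h.not_ge
  rcases eq_or_ne k j with rfl | hkj
  · rw [exchange_right hij] at h
    exact ⟨rfl, rel_of_upperSum_transfer_lt he h⟩
  · rw [exchange_of_ne hki hkj] at h
    exact absurd rfl h.ne

end Exchange

section CumulativeShare

variable {N O : Type*} [Fintype O] {pref : N → O → O → Prop}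

/-- The cumulative share of agent `p.1` at object `p.2`, as a function of the assignment: the
criterion to which max-min fairness is applied. -/
noncomputable def cumulativeShare (pref : N → O → O → Prop) (p : N × O) (x : N → O → ℝ) : ℝ :=
  upperSum (pref p.1) (x p.1) p.2

lemma continuous_cumulativeShare (p : N × O) : Continuous (cumulativeShare pref p) := by
  unfold cumulativeShare upperSum
  fun_prop

lemma isLinearMap_cumulativeShare (p : N × O) : IsLinearMap ℝ (cumulativeShare pref p) where
  map_add x y := by simp [cumulativeShare, upperSum, Finset.sum_add_distrib]
  map_smul c x := by simp [cumulativeShare, upperSum, Finset.mul_sum]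

end CumulativeShare

section Assignment

variable {N O : Type*} [Fintype N] [Fintype O] {x : N → O → ℝ} {X : Set (N → O → ℝ)}
  {Y : Set (O → ℝ)} {pref : N → O → O → Prop}

/-- The random assignments whose vector `∑ i, x i` of expected object loads lies in `Y`. Quotas are
the case `Y = Set.Iic q`. -/
def assignmentsWithLoads (N : Type*) [Fintype N] (Y : Set (O → ℝ)) : Set (N → O → ℝ) :=
  {x | (∀ i, x i ∈ stdSimplex ℝ O) ∧ ∑ i, x i ∈ Y}

lemma isCompact_assignmentsWithLoads (hY : IsClosed Y) :
    IsCompact (assignmentsWithLoads N Y) := by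
  have hrows : IsCompact (Set.univ.pi fun _ : N => stdSimplex ℝ O) :=
    isCompact_univ_pi fun _ => isCompact_stdSimplex ℝ O
  have hloads : IsClosed ((fun x : N → O → ℝ => ∑ i, x i) ⁻¹' Y) :=
    hY.preimage (by fun_prop)
  convert hrows.inter_right hloads using 1
  ext x
  simp [assignmentsWithLoads]

lemma convex_assignmentsWithLoads (hY : Convex ℝ Y) : Convex ℝ (assignmentsWithLoads N Y) := by
  intro x hx y hy s t hs ht hst
  refine ⟨fun i => convex_stdSimplex ℝ O (hx.1 i) (hy.1 i) hs ht hst, ?_⟩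
  simpa [Finset.sum_add_distrib, Finset.smul_sum] using hY hx.2 hy.2 hs ht hst

lemma exchange_mem_assignmentsWithLoads {i j : N} {a b : O} {e : ℝ}
    (hx : x ∈ assignmentsWithLoads N Y) (hij : i ≠ j) (he : 0 ≤ e) (hea : e ≤ x j a)
    (heb : e ≤ x i b) :
    exchange x i j a b e ∈ assignmentsWithLoads N Y := by
  refine ⟨fun k => ?_, by rw [sum_exchange]; exact hx.2⟩
  rcases eq_or_ne k i with rfl | hki
  · exact exchange_left hij ▸ transfer_mem_stdSimplex (hx.1 k) he heb
  rcases eq_or_ne k j with rfl | hkj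
  · exact exchange_right hij ▸ transfer_mem_stdSimplex (hx.1 k) he hea
  · exact exchange_of_ne hki hkj ▸ hx.1 k

/-- The random assignment `x` is ordinally efficient among the assignments in `X`. -/
def IsOrdinallyEfficientIn (pref : N → O → O → Prop) (X : Set (N → O → ℝ)) (x : N → O → ℝ) :
    Prop :=
  ¬ ∃ x' ∈ X, (∀ i, SDom (pref i) (x' i) (x i)) ∧ ∃ j, StrictSDom (pref j) (x' j) (x j)

/-- Every agent's allocation stochastically dominates, for that agent's own preference, the
allocation of every other agent. -/
def IsEnvyFree (pref : N → O → O → Prop) (x : N → O → ℝ) : Prop :=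
  ∀ i j, SDom (pref i) (x i) (x j)

lemma exists_isMaxMinFairOn_cumulativeShare (pref : N → O → O → Prop) (hcompact : IsCompact X)
    (hconvex : Convex ℝ X) (hne : X.Nonempty) :
    ∃ x, IsMaxMinFairOn (cumulativeShare pref) univ X x :=
  exists_isMaxMinFairOn hcompact hne (fun p _ => continuous_cumulativeShare p)
    fun p _ => ((isLinearMap_cumulativeShare p).mk' _).concaveOn hconvex

lemma IsMaxMinFairOn.isOrdinallyEfficientIn
    (hx : IsMaxMinFairOn (cumulativeShare pref) univ X x) : IsOrdinallyEfficientIn pref X x := by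
  rintro ⟨x', hx', hdom, j, -, o, hlt⟩
  obtain ⟨l, -, hless, -⟩ := hx.2 x' hx' (j, o) (mem_univ _) hlt
  exact hless.not_ge (hdom l.1 l.2)

lemma IsMaxMinFairOn.isEnvyFree [∀ i, Std.Total (pref i)] [∀ i, IsTrans O (pref i)]
    (hx : IsMaxMinFairOn (cumulativeShare pref) univ (assignmentsWithLoads N Y) x) :
    IsEnvyFree pref x := by
  obtain ⟨hxY, hfair⟩ := hx
  intro i j o
  by_contra! henvy
  have hij : i ≠ j := by
    rintro rfl
    exact henvy.false
  obtain ⟨b, hbo, hb⟩ : ∃ b, ¬ pref i b o ∧ 0 < x i b := by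
    refine exists_pos_of_upperSum_lt_sum (henvy.trans_le ?_)
    rw [(hxY.1 i).2, ← (hxY.1 j).2]
    exact upperSum_le_sum (hxY.1 j).1
  obtain ⟨a, hao, ha, hworst⟩ := exists_worst_of_upperSum_pos (pref j)
    ((upperSum_nonneg (hxY.1 i).1).trans_lt henvy)
  have hab : pref i a b :=
    _root_.trans hao ((Std.Total.total (r := pref i) o b).resolve_right hbo)
  set e := min (x j a) (x i b)
  have he : 0 < e := lt_min ha hb
  have hgain : upperSum (pref i) (x i) o < upperSum (pref i) (exchange x i j a b e i) o :=
    exchange_left hij ▸ upperSum_lt_upperSum_transfer he hao hbo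
  obtain ⟨⟨k, o'⟩, -, hloss, hle⟩ := hfair (exchange x i j a b e)
    (exchange_mem_assignmentsWithLoads hxY hij he.le (min_le_left _ _) (min_le_right _ _))
    (i, o) (mem_univ _) hgain
  obtain ⟨rfl, hao'⟩ := eq_right_and_rel_of_upperSum_exchange_lt hij he.le hab hloss
  have hshare : upperSum (pref i) (x k) o ≤ upperSum (pref k) (x k) o' :=
    upperSum_le_upperSum_of_forall_pos (hxY.1 k).1 fun c hco hc =>
      _root_.trans (hworst c hco hc) hao'
  exact henvy.not_ge (hshare.trans hle)

lemma isRandomAssignment_iff_mem {q : O → ℕ} :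
    IsRandomAssignment q x ↔ x ∈ assignmentsWithLoads N (Set.Iic fun o => (q o : ℝ)) := by
  constructor
  · rintro ⟨hbox, hrow, hload⟩
    exact ⟨fun i => ⟨fun o => (hbox i o).1, hrow i⟩, fun o => by simpa using hload o⟩
  · rintro ⟨hrow, hload⟩
    exact ⟨fun i o => mem_Icc_of_mem_stdSimplex (hrow i) o, fun i => (hrow i).2,
      fun o => by simpa using hload o⟩

lemma assignmentsWithLoads_Iic_nonempty {q : O → ℝ} (hq : ∀ o, 0 ≤ q o)
    (hcard : Fintype.card N ≤ ∑ o, q o) : (assignmentsWithLoads N (Set.Iic q)).Nonempty := by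
  rcases isEmpty_or_nonempty N with hN | hN
  · exact ⟨isEmptyElim, isEmptyElim, fun o => by simpa using hq o⟩
  have hpos : 0 < ∑ o, q o := (Nat.cast_pos.2 Fintype.card_pos).trans_le hcard
  refine ⟨fun _ o => q o / ∑ o', q o', fun _ => ⟨fun o => div_nonneg (hq o) hpos.le, ?_⟩,
    fun o => ?_⟩
  · rw [← Finset.sum_div, div_self hpos.ne']
  · rw [Finset.sum_apply, Finset.sum_const, nsmul_eq_mul, Finset.card_univ, mul_div_assoc',
      div_le_iff₀ hpos, mul_comm]
    exact mul_le_mul_of_nonneg_left hcard (hq o)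

theorem exists_ordinally_efficient_and_envy_free_general (hclosed : IsClosed Y)
    (hconvex : Convex ℝ Y) (hne : (assignmentsWithLoads N Y).Nonempty)
    (pref : N → O → O → Prop) [∀ i, Std.Total (pref i)] [∀ i, IsTrans O (pref i)] :
    ∃ x ∈ assignmentsWithLoads N Y,
      IsOrdinallyEfficientIn pref (assignmentsWithLoads N Y) x ∧ IsEnvyFree pref x := by
  obtain ⟨x, hx⟩ := exists_isMaxMinFairOn_cumulativeShare pref
    (isCompact_assignmentsWithLoads hclosed) (convex_assignmentsWithLoads hconvex) hne
  exact ⟨x, hx.1, hx.isOrdinallyEfficientIn, hx.isEnvyFree⟩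

end Assignment

/-- In the unconstrained object allocation problem on the full preference domain,
there exists a random assignment that is ordinally efficient and envy-free. -/
theorem exists_ordinally_efficient_and_envy_free
    {N O : Type*} [Fintype N] [Fintype O]
    (q : O → ℕ) (hq : Fintype.card N ≤ ∑ o, q o)
    (pref : N → O → O → Prop)
    (hcomplete : ∀ i a b, pref i a b ∨ pref i b a)
    (htrans : ∀ i a b c, pref i a b → pref i b c → pref i a c) :
    ∃ x : N → O → ℝ, IsRandomAssignment q x ∧
      (¬ ∃ x' : N → O → ℝ, IsRandomAssignment q x' ∧
        (∀ i, SDom (pref i) (x' i) (x i)) ∧ (∃ j, StrictSDom (pref j) (x' j) (x j))) ∧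
      (∀ i j, SDom (pref i) (x i) (x j)) := by
  have (i : N) : Std.Total (pref i) := ⟨hcomplete i⟩
  have (i : N) : IsTrans O (pref i) := ⟨htrans i⟩
  simpa only [IsOrdinallyEfficientIn, IsEnvyFree, ← isRandomAssignment_iff_mem] using
    exists_ordinally_efficient_and_envy_free_general isClosed_Iic (convex_Iic _)
      (assignmentsWithLoads_Iic_nonempty (N := N) (q := fun o => (q o : ℝ))
        (fun _ => Nat.cast_nonneg _) (by exact_mod_cast hq)) pref
end
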